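/- (Weighted Hardy inequality on exterior slices) Let \beta > -1 and let t\ge 2. For any smooth compactly supported function u on \Sigma^e_t = \{x\in\mathbb{R}^3 : |x|\ge \sqrt{(t-1)^2-1}\}\times S^1, \int_{\Sigma^e_t} (2+|x|-t)^{\beta} u^2\, dx\,dy \le C \int_{\Sigma^e_t} (2+|x|-t)^{\beta+2} |\nabla u|^2\, dx\,dy, with C depending only on \beta. -/

import Mathlib

/-!
Along a ray, put `w = r - s` with `s = t - 2`, which is nonnegative on the exterior slice. The
derivative of `r ^ n * w ^ (β + 1) * f ^ 2` is `(β + 1) * r ^ n * w ^ β * f ^ 2`, plus a nonnegative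
term from the Jacobian `r ^ n`, plus the cross term `2 * r ^ n * w ^ (β + 1) * f * f'`; completing
the square bounds the latter below by minus the sum of half the first term and `2 / (β + 1)` times
`r ^ n * w ^ (β + 2) * f' ^ 2`. On integrating from the inner radius to beyond the support, the
outer boundary value vanishes and the inner one has the favourable sign, so the radial inequality
holds with constant `(2 / (β + 1)) ^ 2`. Polar coordinates in `x`, Tonelli in `y` and
`|∂ᵣ u| ≤ |∇ₓ u| ≤ |∇ u|` do the rest.
-/

open Real MeasureTheory

namespace Stmt3

/-- Squared full spatial gradient (in `x ∈ ℝ³` and `y ∈ S¹`). -/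
noncomputable def grad2 (u : EuclideanSpace ℝ (Fin 3) × ℝ → ℝ)
    (p : EuclideanSpace ℝ (Fin 3) × ℝ) : ℝ :=
  (∑ i : Fin 3, (fderiv ℝ u p (EuclideanSpace.single i 1, 0)) ^ 2) +
    (fderiv ℝ u p (0, 1)) ^ 2

/-- The exterior slice `Σ^e_t = {|x| ≥ √((t-1)²-1)} × S¹`, with the circle realized as
the period cell `[0, 2π]` of a `2π`-periodic variable. -/
def slice (t : ℝ) : Set (EuclideanSpace ℝ (Fin 3) × ℝ) :=
  {p | Real.sqrt ((t - 1) ^ 2 - 1) ≤ ‖p.1‖ ∧ p.2 ∈ Set.Icc 0 (2 * π)}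

section HalfLine

open Set

variable {β s a b : ℝ} {n : ℕ} {f f' : ℝ → ℝ}

lemma hasDerivAt_pow_mul_rpow_mul_sq {p r d : ℝ} (hsr : s < r) (hf : HasDerivAt f d r) :
    HasDerivAt (fun r => r ^ n * ((r - s) ^ p * f r ^ 2))
      (n * r ^ (n - 1) * ((r - s) ^ p * f r ^ 2) +
        r ^ n * (p * (r - s) ^ (p - 1) * f r ^ 2 + (r - s) ^ p * (2 * f r * d))) r := by
  have hweight : HasDerivAt (fun r : ℝ => (r - s) ^ p) (p * (r - s) ^ (p - 1)) r := by
    simpa using ((hasDerivAt_id r).sub_const s).rpow_const (Or.inl (sub_pos.2 hsr).ne')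
  convert! (hasDerivAt_pow n r).mul (hweight.mul (hf.pow 2)) using 1
  simp

lemma half_mul_sq_sub_le {k : ℝ} (hk : 0 < k) (x z : ℝ) :
    k / 2 * x ^ 2 - 2 / k * z ^ 2 ≤ k * x ^ 2 + 2 * x * z := by
  have hsq : k * x ^ 2 + 2 * x * z - (k / 2 * x ^ 2 - 2 / k * z ^ 2) =
      k / 2 * (x + 2 / k * z) ^ 2 := by
    field_simp
    ring
  have : 0 ≤ k / 2 * (x + 2 / k * z) ^ 2 := by positivity
  linarith

lemma half_mul_sub_le_deriv_pow_mul_rpow_mul_sq (hβ : -1 < β) {r : ℝ} (hr : 0 ≤ r)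
    (hsr : s < r) (x z : ℝ) :
    (β + 1) / 2 * (r ^ n * ((r - s) ^ β * x ^ 2)) -
        2 / (β + 1) * (r ^ n * ((r - s) ^ (β + 2) * z ^ 2)) ≤
      n * r ^ (n - 1) * ((r - s) ^ (β + 1) * x ^ 2) +
        r ^ n * ((β + 1) * (r - s) ^ β * x ^ 2 + (r - s) ^ (β + 1) * (2 * x * z)) := by
  have hw : 0 < r - s := sub_pos.2 hsr
  have hw₁ : (r - s) ^ (β + 1) = (r - s) ^ β * (r - s) := rpow_add_one hw.ne' β
  have hw₂ : (r - s) ^ (β + 2) = (r - s) ^ β * (r - s) ^ 2 := mod_cast rpow_add_natCast hw.ne' β 2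
  have hjacobian : 0 ≤ n * r ^ (n - 1) * ((r - s) ^ (β + 1) * x ^ 2) := by positivity
  have hsquare := mul_le_mul_of_nonneg_left
    (half_mul_sq_sub_le (by linarith : 0 < β + 1) x ((r - s) * z))
    (by positivity : 0 ≤ r ^ n * (r - s) ^ β)
  rw [hw₁] at hjacobian
  rw [hw₁, hw₂]
  linarith

lemma intervalIntegrable_pow_mul_rpow_mul_sq (hβ : -1 < β) (hab : a ≤ b)
    (hf : ContinuousOn f (Icc a b)) :
    IntervalIntegrable (fun r => r ^ n * ((r - s) ^ β * f r ^ 2)) volume a b := by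
  have hweight : IntervalIntegrable (fun r => (r - s) ^ β) volume a b := by
    simpa using (intervalIntegral.intervalIntegrable_rpow' (a := a - s) (b := b - s)
      hβ).comp_sub_right s
  rw [← uIcc_of_le hab] at hf
  exact (hweight.mul_continuousOn (hf.pow 2)).continuousOn_mul (by fun_prop)

lemma half_mul_intervalIntegral_sub_le_boundary (hβ : -1 < β) (ha : 0 ≤ a) (hsa : s ≤ a)
    (hab : a ≤ b) (hf : ContinuousOn f (Icc a b))
    (hderiv : ∀ r ∈ Ioo a b, HasDerivAt f (f' r) r) (hf' : ContinuousOn f' (Icc a b)) :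
    (β + 1) / 2 * (∫ r in a..b, r ^ n * ((r - s) ^ β * f r ^ 2)) -
        2 / (β + 1) * (∫ r in a..b, r ^ n * ((r - s) ^ (β + 2) * f' r ^ 2)) ≤
      b ^ n * ((b - s) ^ (β + 1) * f b ^ 2) - a ^ n * ((a - s) ^ (β + 1) * f a ^ 2) := by
  have hint := (intervalIntegrable_pow_mul_rpow_mul_sq (s := s) (n := n) hβ hab hf).const_mul
    ((β + 1) / 2)
  have hint' := (intervalIntegrable_pow_mul_rpow_mul_sq (s := s) (n := n)
    (by linarith : -1 < β + 2) hab hf').const_mul (2 / (β + 1))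
  have hweight : Continuous fun r => (r - s) ^ (β + 1) :=
    (continuous_sub_right s).rpow_const fun _ => Or.inr (by linarith)
  rw [← intervalIntegral.integral_const_mul, ← intervalIntegral.integral_const_mul,
    ← intervalIntegral.integral_sub hint hint']
  refine intervalIntegral.integral_le_sub_of_hasDeriv_right_of_le
    (g := fun r => r ^ n * ((r - s) ^ (β + 1) * f r ^ 2)) hab
    ((continuousOn_pow n).mul (hweight.continuousOn.mul (hf.pow 2)))
    (fun r hr => (hasDerivAt_pow_mul_rpow_mul_sq (hsa.trans_lt hr.1)
      (hderiv r hr)).hasDerivWithinAt)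
    ((intervalIntegrable_iff_integrableOn_Icc_of_le hab).1 (hint.sub hint')) fun r hr => ?_
  rw [add_sub_cancel_right]
  exact half_mul_sub_le_deriv_pow_mul_rpow_mul_sq hβ (ha.trans hr.1.le) (hsa.trans_lt hr.1) _ _

lemma intervalIntegral_pow_mul_rpow_mul_sq_le (hβ : -1 < β) (ha : 0 ≤ a) (hsa : s ≤ a)
    (hab : a ≤ b) (hf : ContinuousOn f (Icc a b))
    (hderiv : ∀ r ∈ Ioo a b, HasDerivAt f (f' r) r) (hf' : ContinuousOn f' (Icc a b))
    (hb : f b = 0) :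
    ∫ r in a..b, r ^ n * ((r - s) ^ β * f r ^ 2) ≤
      4 / (β + 1) ^ 2 * ∫ r in a..b, r ^ n * ((r - s) ^ (β + 2) * f' r ^ 2) := by
  have hk : 0 < β + 1 := by linarith
  have hparts := half_mul_intervalIntegral_sub_le_boundary (n := n) hβ ha hsa hab hf hderiv hf'
  set I := ∫ r in a..b, r ^ n * ((r - s) ^ β * f r ^ 2)
  set I' := ∫ r in a..b, r ^ n * ((r - s) ^ (β + 2) * f' r ^ 2)
  have hboundary : 0 ≤ a ^ n * ((a - s) ^ (β + 1) * f a ^ 2) := by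
    have := rpow_nonneg (sub_nonneg.2 hsa) (β + 1)
    positivity
  have hhalf : (β + 1) / 2 * I ≤ 2 / (β + 1) * I' := by
    rw [hb] at hparts
    linarith
  calc I = 2 / (β + 1) * ((β + 1) / 2 * I) := by field_simp
    _ ≤ 2 / (β + 1) * (2 / (β + 1) * I') := by gcongr
    _ = 4 / (β + 1) ^ 2 * I' := by field_simp; ring

lemma lintegral_Ioc_ofReal_pow_mul_rpow_mul_sq (hβ : -1 < β) (ha : 0 ≤ a) (hsa : s ≤ a)
    (hab : a ≤ b) (hf : ContinuousOn f (Icc a b)) :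
    ∫⁻ r in Ioc a b, ENNReal.ofReal (r ^ n * ((r - s) ^ β * f r ^ 2)) =
      ENNReal.ofReal (∫ r in a..b, r ^ n * ((r - s) ^ β * f r ^ 2)) := by
  rw [intervalIntegral.integral_of_le hab,
    ofReal_integral_eq_lintegral_ofReal (intervalIntegrable_pow_mul_rpow_mul_sq hβ hab hf).1]
  filter_upwards [ae_restrict_mem measurableSet_Ioc] with r hr
  have hr₀ : 0 ≤ r := ha.trans hr.1.le
  have := rpow_nonneg (sub_nonneg.2 (hsa.trans hr.1.le)) β
  simp only [Pi.zero_apply]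
  positivity

lemma lintegral_Ioi_pow_mul_rpow_mul_sq_le (hβ : -1 < β) (ha : 0 ≤ a) (hsa : s ≤ a)
    (hf : ContinuousOn f (Ici a)) (hderiv : ∀ r ∈ Ioi a, HasDerivAt f (f' r) r)
    (hf' : ContinuousOn f' (Ici a)) {R : ℝ} (hR : ∀ r, R ≤ r → f r = 0) :
    ∫⁻ r in Ioi a, ENNReal.ofReal (r ^ n * ((r - s) ^ β * f r ^ 2)) ≤
      ENNReal.ofReal (4 / (β + 1) ^ 2) *
        ∫⁻ r in Ioi a, ENNReal.ofReal (r ^ n * ((r - s) ^ (β + 2) * f' r ^ 2)) := by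
  set b := max a R
  have hab : a ≤ b := le_max_left a R
  have hfab := hf.mono (Icc_subset_Ici_self : Icc a b ⊆ Ici a)
  have hfab' := hf'.mono (Icc_subset_Ici_self : Icc a b ⊆ Ici a)
  have htail : ∫⁻ r in Ioi b, ENNReal.ofReal (r ^ n * ((r - s) ^ β * f r ^ 2)) = 0 := by
    refine (setLIntegral_congr_fun measurableSet_Ioi fun r hr => ?_).trans lintegral_zero
    simp [hR r ((le_max_right a R).trans (le_of_lt hr))]
  calc ∫⁻ r in Ioi a, ENNReal.ofReal (r ^ n * ((r - s) ^ β * f r ^ 2))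
    _ = ∫⁻ r in Ioc a b, ENNReal.ofReal (r ^ n * ((r - s) ^ β * f r ^ 2)) := by
      rw [← Ioc_union_Ioi_eq_Ioi hab, lintegral_union measurableSet_Ioi
        (Ioc_disjoint_Ioi le_rfl), htail, add_zero]
    _ ≤ ENNReal.ofReal (4 / (β + 1) ^ 2) *
        ∫⁻ r in Ioc a b, ENNReal.ofReal (r ^ n * ((r - s) ^ (β + 2) * f' r ^ 2)) := by
      rw [lintegral_Ioc_ofReal_pow_mul_rpow_mul_sq hβ ha hsa hab hfab,
        lintegral_Ioc_ofReal_pow_mul_rpow_mul_sq (by linarith) ha hsa hab hfab',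
        ← ENNReal.ofReal_mul (by positivity)]
      exact ENNReal.ofReal_le_ofReal <| intervalIntegral_pow_mul_rpow_mul_sq_le hβ ha hsa hab
        hfab (fun r hr => hderiv r hr.1) hfab' (hR b (le_max_right a R))
    _ ≤ _ := by
      gcongr
      exact Ioc_subset_Ioi_self

end HalfLine

section Polar

open Set Metric

variable {E : Type*} [NormedAddCommGroup E] [NormedSpace ℝ E] [FiniteDimensional ℝ E]
  [Nontrivial E] [MeasurableSpace E] [BorelSpace E] (μ : Measure E) [μ.IsAddHaarMeasure]

lemma lintegral_eq_lintegral_toSphere_lintegral_Ioi {G : E → ENNReal} (hG : Measurable G) :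
    ∫⁻ x, G x ∂μ = ∫⁻ ω : sphere (0 : E) 1, (∫⁻ r in Ioi (0 : ℝ),
      ENNReal.ofReal (r ^ (Module.finrank ℝ E - 1)) * G (r • (ω : E))) ∂μ.toSphere := by
  have hGpolar : Measurable fun p : sphere (0 : E) 1 × Ioi (0 : ℝ) =>
      G ((p.2 : ℝ) • (p.1 : E)) := hG.comp (by fun_prop)
  calc ∫⁻ x, G x ∂μ
    _ = ∫⁻ x : ({0}ᶜ : Set E), G x ∂μ.comap (↑) := by
      rw [lintegral_subtype_comap (measurableSet_singleton _).compl, restrict_compl_singleton]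
    _ = ∫⁻ x : ({0}ᶜ : Set E), G ((homeomorphUnitSphereProd E).symm
          (homeomorphUnitSphereProd E x)) ∂μ.comap (↑) := by
      simp only [Homeomorph.symm_apply_apply]
    _ = ∫⁻ p, G ((p.2 : ℝ) • (p.1 : E))
          ∂μ.toSphere.prod (.volumeIoiPow (Module.finrank ℝ E - 1)) := by
      simp only [homeomorphUnitSphereProd_symm_apply_coe]
      exact μ.measurePreserving_homeomorphUnitSphereProd.lintegral_comp hGpolar
    _ = _ := by
      rw [lintegral_prod _ hGpolar.aemeasurable]
      refine lintegral_congr fun ω => ?_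
      have hGray : Measurable fun r : Ioi (0 : ℝ) => G ((r : ℝ) • (ω : E)) := hG.comp (by fun_prop)
      rw [Measure.volumeIoiPow, lintegral_withDensity_eq_lintegral_mul _ (by fun_prop) hGray]
      exact lintegral_subtype_comap measurableSet_Ioi
        fun r : ℝ => ENNReal.ofReal (r ^ (Module.finrank ℝ E - 1)) * G (r • (ω : E))

lemma setLIntegral_le_norm_eq_lintegral_toSphere {a : ℝ} (ha : 0 ≤ a) {G : E → ENNReal}
    (hG : Measurable G) :
    ∫⁻ x in {x | a ≤ ‖x‖}, G x ∂μ = ∫⁻ ω : sphere (0 : E) 1, (∫⁻ r in Ioi a,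
      ENNReal.ofReal (r ^ (Module.finrank ℝ E - 1)) * G (r • (ω : E))) ∂μ.toSphere := by
  have hmeas : MeasurableSet {x : E | a ≤ ‖x‖} := measurableSet_le measurable_const measurable_norm
  have hray : (Ici a ∩ Ioi 0 : Set ℝ) =ᵐ[volume] Ioi a := by
    have : (Ioi a ∩ Ioi 0 : Set ℝ) = Ioi a := inter_eq_left.2 (Ioi_subset_Ioi ha)
    simpa only [this] using
      (Ioi_ae_eq_Ici (μ := volume) (a := a)).symm.inter (ae_eq_refl (Ioi (0 : ℝ)))
  rw [← lintegral_indicator hmeas,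
    lintegral_eq_lintegral_toSphere_lintegral_Ioi μ (hG.indicator hmeas)]
  refine lintegral_congr fun ω => ?_
  rw [← setLIntegral_congr hray, ← Measure.restrict_restrict measurableSet_Ici,
    ← lintegral_indicator measurableSet_Ici]
  refine setLIntegral_congr_fun measurableSet_Ioi fun r (hr : 0 < r) => ?_
  by_cases har : a ≤ r <;> simp [norm_smul, abs_of_pos hr, har]

variable {β s a : ℝ}

lemma setLIntegral_rpow_norm_sub_mul_sq_le (hβ : -1 < β) (ha : 0 ≤ a) (hsa : s ≤ a)
    {v : E → ℝ} {v' : E → StrongDual ℝ E} (hv : ∀ x, HasFDerivAt v (v' x) x)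
    (hv' : Continuous v') {R : ℝ} (hR : ∀ x, R ≤ ‖x‖ → v x = 0) :
    ∫⁻ x in {x | a ≤ ‖x‖}, ENNReal.ofReal ((‖x‖ - s) ^ β * v x ^ 2) ∂μ ≤
      ENNReal.ofReal (4 / (β + 1) ^ 2) *
        ∫⁻ x in {x | a ≤ ‖x‖}, ENNReal.ofReal ((‖x‖ - s) ^ (β + 2) * ‖v' x‖ ^ 2) ∂μ := by
  have hvc : Continuous v := continuous_iff_continuousAt.2 fun x => (hv x).continuousAt
  rw [setLIntegral_le_norm_eq_lintegral_toSphere μ ha (by fun_prop),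
    setLIntegral_le_norm_eq_lintegral_toSphere μ ha (by fun_prop),
    ← lintegral_const_mul' _ _ ENNReal.ofReal_ne_top]
  refine lintegral_mono fun ω => ?_
  have hω : ‖(ω : E)‖ = 1 := norm_eq_of_mem_sphere ω
  have hnorm : ∀ r ∈ Ioi a, ‖r • (ω : E)‖ = r := fun r hr => by
    rw [norm_smul, hω, mul_one, norm_of_nonneg (ha.trans (le_of_lt hr))]
  calc ∫⁻ r in Ioi a, ENNReal.ofReal (r ^ (Module.finrank ℝ E - 1)) *
        ENNReal.ofReal ((‖r • (ω : E)‖ - s) ^ β * v (r • (ω : E)) ^ 2)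
    _ = ∫⁻ r in Ioi a, ENNReal.ofReal (r ^ (Module.finrank ℝ E - 1) *
        ((r - s) ^ β * v (r • (ω : E)) ^ 2)) :=
      setLIntegral_congr_fun measurableSet_Ioi fun r (hr : a < r) => by
        rw [hnorm r hr, ← ENNReal.ofReal_mul (pow_nonneg (ha.trans hr.le) _)]
    _ ≤ ENNReal.ofReal (4 / (β + 1) ^ 2) * ∫⁻ r in Ioi a,
        ENNReal.ofReal (r ^ (Module.finrank ℝ E - 1) *
          ((r - s) ^ (β + 2) * v' (r • (ω : E)) ω ^ 2)) :=
      lintegral_Ioi_pow_mul_rpow_mul_sq_le hβ ha hsa (by fun_prop)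
        (fun r _ => (hv _).comp_hasDerivAt r
          (by simpa using (hasDerivAt_id r).smul_const (ω : E))) (by fun_prop)
        (R := R) fun r hr => hR _ (by simpa [norm_smul] using hr.trans (le_abs_self r))
    _ ≤ _ := by
      gcongr _ * ?_
      refine setLIntegral_mono' measurableSet_Ioi fun r (hr : a < r) => ?_
      have hr₀ : 0 ≤ r := ha.trans hr.le
      have hw : 0 ≤ r - s := sub_nonneg.2 (hsa.trans hr.le)
      have hle : v' (r • (ω : E)) ω ^ 2 ≤ ‖v' (r • (ω : E))‖ ^ 2 :=
        sq_le_sq.2 (by simpa using (v' (r • (ω : E))).unit_le_opNorm ω hω.le)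
      rw [hnorm r hr, ← ENNReal.ofReal_mul (pow_nonneg hr₀ _)]
      gcongr

end Polar

section Product

open Set Metric Topology

variable {E F : Type*} [NormedAddCommGroup E] [NormedSpace ℝ E] [FiniteDimensional ℝ E]
  [MeasurableSpace E] [BorelSpace E] {μ : Measure E} [μ.IsAddHaarMeasure]
  [TopologicalSpace F] [MeasurableSpace F] [OpensMeasurableSpace F] {ν : Measure F}
  {β s a R : ℝ} {K : Set F}

omit [NormedSpace ℝ E] [FiniteDimensional ℝ E] [TopologicalSpace F] [OpensMeasurableSpace F] in
lemma measurableSet_le_norm_prod (hK : MeasurableSet K) :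
    MeasurableSet ({x : E | a ≤ ‖x‖} ×ˢ K) :=
  (measurableSet_le measurable_const measurable_norm).prod hK

omit [NormedSpace ℝ E] [FiniteDimensional ℝ E] [MeasurableSpace E] [BorelSpace E]
  [MeasurableSpace F] [OpensMeasurableSpace F] in
lemma eventuallyEq_zero_of_lt_norm {u : E × F → ℝ} (hR : ∀ x y, R ≤ ‖x‖ → u (x, y) = 0)
    {p : E × F} (hp : R < ‖p.1‖) : u =ᶠ[𝓝 p] 0 := by
  filter_upwards [(isOpen_lt continuous_const continuous_fst.norm).mem_nhds hp] with q hq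
  exact hR q.1 q.2 (le_of_lt hq)

lemma integrableOn_rpow_norm_sub_mul [T2Space F] [IsFiniteMeasureOnCompacts ν] (hβ : 0 ≤ β)
    (hK : IsCompact K) {g : E × F → ℝ} (hg : Continuous g)
    (hR : ∀ x y, R < ‖x‖ → g (x, y) = 0) :
    IntegrableOn (fun p : E × F => (‖p.1‖ - s) ^ β * g p) ({x | a ≤ ‖x‖} ×ˢ K) (μ.prod ν) := by
  have hweight : Continuous fun p : E × F => (‖p.1‖ - s) ^ β :=
    (by fun_prop : Continuous fun p : E × F => ‖p.1‖ - s).rpow_const fun _ => Or.inr hβ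
  refine ((hweight.mul hg).continuousOn.integrableOn_compact
    ((isCompact_closedBall (0 : E) R).prod hK)).of_forall_sdiff_eq_zero
    (measurableSet_le_norm_prod hK.measurableSet) ?_
  rintro ⟨x, y⟩ ⟨⟨-, hy⟩, hxy⟩
  have hx : R < ‖x‖ := by simpa [hy] using hxy
  simp [hR x y hx]

lemma setLIntegral_prod_rpow_norm_sub_mul_sq_le [Nontrivial E] [SFinite ν] (hβ : -1 < β)
    (ha : 0 ≤ a) (hsa : s ≤ a) {u : E × F → ℝ} {u' : E × F → StrongDual ℝ E}
    (hu : Continuous u) (hderiv : ∀ p, HasFDerivAt (fun x => u (x, p.2)) (u' p) p.1)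
    (hu' : Continuous u') (hR : ∀ x y, R ≤ ‖x‖ → u (x, y) = 0) :
    ∫⁻ p in {x | a ≤ ‖x‖} ×ˢ K, ENNReal.ofReal ((‖p.1‖ - s) ^ β * u p ^ 2) ∂μ.prod ν ≤
      ENNReal.ofReal (4 / (β + 1) ^ 2) * ∫⁻ p in {x | a ≤ ‖x‖} ×ˢ K,
        ENNReal.ofReal ((‖p.1‖ - s) ^ (β + 2) * ‖u' p‖ ^ 2) ∂μ.prod ν := by
  rw [setLIntegral_prod_symm _ (by fun_prop), setLIntegral_prod_symm _ (by fun_prop),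
    ← lintegral_const_mul' _ _ ENNReal.ofReal_ne_top]
  exact lintegral_mono fun y => setLIntegral_rpow_norm_sub_mul_sq_le μ hβ ha hsa
    (fun x => hderiv (x, y)) (by fun_prop) fun x => hR x y

lemma integral_le_mul_integral_of_lintegral_ofReal_le {X : Type*} [MeasurableSpace X]
    {m : Measure X} {f g : X → ℝ} {c : ℝ} (hc : 0 ≤ c) (hf : 0 ≤ᵐ[m] f)
    (hfm : AEStronglyMeasurable f m) (hg : 0 ≤ᵐ[m] g) (hgi : Integrable g m)
    (hfg : ∫⁻ x, ENNReal.ofReal (f x) ∂m ≤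
      ENNReal.ofReal c * ∫⁻ x, ENNReal.ofReal (g x) ∂m) :
    ∫ x, f x ∂m ≤ c * ∫ x, g x ∂m := by
  rw [integral_eq_lintegral_of_nonneg_ae hf hfm]
  refine ENNReal.toReal_le_of_le_ofReal (mul_nonneg hc (integral_nonneg_of_ae hg)) ?_
  rwa [ENNReal.ofReal_mul hc, ofReal_integral_eq_lintegral_ofReal hgi hg]

theorem weighted_hardy_exterior_general [Nontrivial E] [T2Space F] [SFinite ν]
    [IsFiniteMeasureOnCompacts ν] (hβ : -1 < β) (ha : 0 ≤ a) (hsa : s ≤ a) (hK : IsCompact K)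
    {u : E × F → ℝ} {u' : E × F → StrongDual ℝ E} (hu : Continuous u)
    (hderiv : ∀ p, HasFDerivAt (fun x => u (x, p.2)) (u' p) p.1) (hu' : Continuous u')
    (hR : ∀ x y, R ≤ ‖x‖ → u (x, y) = 0) :
    ∫ p in {x | a ≤ ‖x‖} ×ˢ K, (‖p.1‖ - s) ^ β * u p ^ 2 ∂μ.prod ν ≤
      4 / (β + 1) ^ 2 *
        ∫ p in {x | a ≤ ‖x‖} ×ˢ K, (‖p.1‖ - s) ^ (β + 2) * ‖u' p‖ ^ 2 ∂μ.prod ν := by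
  have hnonneg (γ : ℝ) (g : E × F → ℝ) :
      0 ≤ᵐ[(μ.prod ν).restrict ({x | a ≤ ‖x‖} ×ˢ K)] fun p => (‖p.1‖ - s) ^ γ * g p ^ 2 := by
    filter_upwards [ae_restrict_mem (measurableSet_le_norm_prod hK.measurableSet)] with p hp
    exact mul_nonneg (rpow_nonneg (sub_nonneg.2 (hsa.trans hp.1)) γ) (sq_nonneg (g p))
  refine integral_le_mul_integral_of_lintegral_ofReal_le (by positivity) (hnonneg β u)
    (Measurable.aestronglyMeasurable (by fun_prop)) (hnonneg (β + 2) (‖u' ·‖))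
    (integrableOn_rpow_norm_sub_mul (R := R) (by linarith) hK (by fun_prop) fun x y hx => ?_)
    (setLIntegral_prod_rpow_norm_sub_mul_sq_le hβ ha hsa hu hderiv hu' hR)
  have hloc : (fun x => u (x, y)) =ᶠ[𝓝 x] 0 :=
    (eventuallyEq_zero_of_lt_norm hR hx).comp_tendsto (Continuous.prodMk_left y).continuousAt
  have hzero : u' (x, y) = 0 :=
    (hderiv (x, y)).unique ((hasFDerivAt_const 0 x).congr_of_eventuallyEq hloc)
  simp [hzero]

end Product

section Slice

open Topology

variable {u : EuclideanSpace ℝ (Fin 3) × ℝ → ℝ}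

lemma norm_fderiv_comp_inl_sq_le_grad2 (p : EuclideanSpace ℝ (Fin 3) × ℝ) :
    ‖(fderiv ℝ u p).comp (.inl ℝ _ ℝ)‖ ^ 2 ≤ grad2 u p := by
  rw [(EuclideanSpace.basisFun (Fin 3) ℝ).norm_dual]
  simpa [grad2] using sq_nonneg (fderiv ℝ u p (0, 1))

lemma continuous_grad2 (hu : ContDiff ℝ 1 u) : Continuous (grad2 u) := by
  have := hu.continuous_fderiv one_ne_zero
  unfold grad2
  fun_prop

lemma grad2_eq_zero_of_eventuallyEq {p : EuclideanSpace ℝ (Fin 3) × ℝ} (hu : u =ᶠ[𝓝 p] 0) :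
    grad2 u p = 0 := by
  simp [grad2, hu.fderiv_eq]

lemma sub_two_le_sqrt {t : ℝ} (ht : 2 ≤ t) : t - 2 ≤ √((t - 1) ^ 2 - 1) :=
  le_sqrt_of_sq_le (by linarith)

lemma setIntegral_slice_rpow_mul_norm_sq_le {t γ R : ℝ} (ht : 2 ≤ t) (hγ : 0 ≤ γ)
    (hu : ContDiff ℝ 1 u) (hR : ∀ x y, R ≤ ‖x‖ → u (x, y) = 0) :
    ∫ p in slice t, (‖p.1‖ - (t - 2)) ^ γ * ‖(fderiv ℝ u p).comp (.inl ℝ _ ℝ)‖ ^ 2 ≤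
      ∫ p in slice t, (‖p.1‖ - (t - 2)) ^ γ * grad2 u p := by
  have hweight : ∀ᵐ p ∂volume.restrict (slice t), 0 ≤ (‖p.1‖ - (t - 2)) ^ γ := by
    filter_upwards [ae_restrict_mem (measurableSet_le_norm_prod measurableSet_Icc)] with p hp
    exact rpow_nonneg (sub_nonneg.2 ((sub_two_le_sqrt ht).trans hp.1)) γ
  refine integral_mono_of_nonneg (hweight.mono fun p hp => mul_nonneg hp (sq_nonneg _))
    (integrableOn_rpow_norm_sub_mul hγ isCompact_Icc (continuous_grad2 hu) fun x y hx =>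
      grad2_eq_zero_of_eventuallyEq (eventuallyEq_zero_of_lt_norm hR hx))
    (hweight.mono fun p hp =>
      mul_le_mul_of_nonneg_left (norm_fderiv_comp_inl_sq_le_grad2 p) hp)

end Slice

/-- Weighted Hardy inequality on exterior slices. -/
theorem weighted_hardy_exterior (β : ℝ) (hβ : -1 < β) :
    ∃ C : ℝ, 0 < C ∧ ∀ t : ℝ, 2 ≤ t →
      ∀ u : EuclideanSpace ℝ (Fin 3) × ℝ → ℝ, ContDiff ℝ (⊤ : ℕ∞) u →
        (∀ x y, u (x, y + 2 * π) = u (x, y)) →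
        (∃ R : ℝ, ∀ x y, R ≤ ‖x‖ → u (x, y) = 0) →
        ∫ p in slice t, (2 + ‖p.1‖ - t) ^ β * (u p) ^ 2 ≤
          C * ∫ p in slice t, (2 + ‖p.1‖ - t) ^ (β + 2) * grad2 u p := by
  have hk : 0 < β + 1 := by linarith
  refine ⟨4 / (β + 1) ^ 2, by positivity, fun t ht u hu _ ⟨R, hR⟩ => ?_⟩
  have hu₁ : ContDiff ℝ 1 u := hu.of_le (by simp)
  have hdist (r : ℝ) : 2 + r - t = r - (t - 2) := by ring
  simp only [hdist]
  calc ∫ p in slice t, (‖p.1‖ - (t - 2)) ^ β * u p ^ 2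
    _ ≤ 4 / (β + 1) ^ 2 * ∫ p in slice t,
        (‖p.1‖ - (t - 2)) ^ (β + 2) * ‖(fderiv ℝ u p).comp (.inl ℝ _ ℝ)‖ ^ 2 :=
      weighted_hardy_exterior_general hβ (sqrt_nonneg _) (sub_two_le_sqrt ht) isCompact_Icc
        hu₁.continuous
        (fun p => (hu₁.differentiable one_ne_zero p).hasFDerivAt.comp (f := (·, p.2)) p.1
          (hasFDerivAt_prodMk_left p.1 p.2))
        ((hu₁.continuous_fderiv one_ne_zero).clm_comp continuous_const) hR
    _ ≤ 4 / (β + 1) ^ 2 * ∫ p in slice t, (‖p.1‖ - (t - 2)) ^ (β + 2) * grad2 u p := by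
      have := setIntegral_slice_rpow_mul_norm_sq_le (γ := β + 2) ht (by linarith) hu₁ hR
      gcongr

end Stmt3
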